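/- h(4, 2K₂) = 6, h(5, 2K₂) = 7, and h(6, 2K₂) = 7. -/

import Mathlib

open SimpleGraph

variable {V W : Type*}

/-- Two `Sym2` elements (edges) are vertex-disjoint. -/
def sym2Disjoint (e e' : Sym2 V) : Prop := ∀ v, v ∈ e → v ∉ e'

/-- Edge set of the copy of `G` in `H` given by an (injective) homomorphism. -/
def copyEdges (G : SimpleGraph V) (H : SimpleGraph W) (φ : G →g H) : Set (Sym2 W) :=
  Sym2.map φ '' G.edgeSet

/-- The edge set `E` is `f`-free. -/
def IsFreeSet (f : Sym2 W → Sym2 W) (E : Set (Sym2 W)) : Prop := ∀ e ∈ E, f e ∉ E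

/-- `f` is an edge mapping of `H` with `f e ≠ e` (equivalently `|f e ∩ e| ≤ 1`). -/
def IsEdgeMap (H : SimpleGraph W) (f : Sym2 W → Sym2 W) : Prop :=
  ∀ e ∈ H.edgeSet, f e ∈ H.edgeSet ∧ f e ≠ e

/-- `f` is an edge mapping of `H` with `f e ∩ e = ∅`. -/
def IsDisjEdgeMap (H : SimpleGraph W) (f : Sym2 W → Sym2 W) : Prop :=
  ∀ e ∈ H.edgeSet, f e ∈ H.edgeSet ∧ sym2Disjoint e (f e)

/-- `H` contains a copy of `G` (as a not necessarily induced subgraph). -/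
def Contains (G : SimpleGraph V) (H : SimpleGraph W) : Prop :=
  ∃ φ : G →g H, Function.Injective φ

/-- `H` has no `f`-free copy of `G`. -/
def NoFreeCopy (G : SimpleGraph V) (H : SimpleGraph W) (f : Sym2 W → Sym2 W) : Prop :=
  ∀ φ : G →g H, Function.Injective φ → ¬ IsFreeSet f (copyEdges G H φ)

/-- The Turán number `ex(n, G)`. -/
noncomputable def exNum (n : ℕ) (G : SimpleGraph V) : ℕ :=
  sSup {m | ∃ H : SimpleGraph (Fin n), H.edgeSet.ncard = m ∧ ¬ Contains G H}

/-- The parameter `h(n, G)`. -/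
noncomputable def hNum (n : ℕ) (G : SimpleGraph V) : ℕ :=
  sSup {m | ∃ (H : SimpleGraph (Fin n)) (f : Sym2 (Fin n) → Sym2 (Fin n)),
    H.edgeSet.ncard = m ∧ IsEdgeMap H f ∧ NoFreeCopy G H f}

/-- Independence number. -/
noncomputable def indepNum (G : SimpleGraph V) [Fintype V] : ℕ :=
  sSup {m | ∃ s : Finset V, (∀ v ∈ s, ∀ w ∈ s, ¬ G.Adj v w) ∧ s.card = m}

/-- The matching `tK₂` on `Fin (2t)`: vertices `2i, 2i+1` are matched. -/
def matching (t : ℕ) : SimpleGraph (Fin (2*t)) :=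
  SimpleGraph.fromRel (fun v w => (v : ℕ) / 2 = (w : ℕ) / 2)

/-- The star `K_{1,r}` on `Fin (r+1)`, with center `0`. -/
def starG (r : ℕ) : SimpleGraph (Fin (r+1)) :=
  SimpleGraph.fromRel (fun v _ => v = 0)

/-!
Upper bound for six vertices: double count the pairs of an edge `e` of `H` and a perfect matching of
`K₆` that contains `e` but not `f e`. Each edge lies in three perfect matchings, at most one of
which contains `f e`. Two edges of `H` in the same perfect matching are disjoint, so `f` maps one of
them to the other, and at most one of them is mapped out of the matching. As there are fifteen
perfect matchings, `2 |E(H)| ≤ 15`.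

Lower bounds: each of the three disjoint pairs of edges of `K₄` contains one edge through the
vertex `0`, and `f` maps this edge to the other one. The images of the edges of the triangle `123`
remain free: all of them can be sent to a pendant edge attached at `0`.
-/

section hNum

variable {G : SimpleGraph V} {n : ℕ}

theorem ncard_edgeSet_le_choose_two [Fintype W] (H : SimpleGraph W) :
    H.edgeSet.ncard ≤ (Fintype.card W).choose 2 := by
  classical
  rw [← coe_edgeFinset, Set.ncard_coe_finset]
  exact H.card_edgeFinset_le_card_choose_two

theorem hNum_le {k : ℕ} (h : ∀ (H : SimpleGraph (Fin n)) (f : Sym2 (Fin n) → Sym2 (Fin n)),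
    IsEdgeMap H f → NoFreeCopy G H f → H.edgeSet.ncard ≤ k) : hNum n G ≤ k :=
  csSup_le' fun _ ⟨H, f, hcard, hf, hG⟩ => hcard ▸ h H f hf hG

theorem hNum_le_choose_two (n : ℕ) (G : SimpleGraph V) : hNum n G ≤ n.choose 2 :=
  hNum_le fun H _ _ _ => by simpa using ncard_edgeSet_le_choose_two H

theorem ncard_edgeSet_le_hNum {H : SimpleGraph (Fin n)} {f : Sym2 (Fin n) → Sym2 (Fin n)}
    (hf : IsEdgeMap H f) (hG : NoFreeCopy G H f) : H.edgeSet.ncard ≤ hNum n G :=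
  le_csSup ⟨_, fun _ ⟨H, _, hcard, _⟩ => hcard ▸ ncard_edgeSet_le_choose_two H⟩
    ⟨H, f, rfl, hf, hG⟩

end hNum

section Map

variable {W' : Type*} {G : SimpleGraph V} {H : SimpleGraph W} {ι : W ↪ W'}
  {f : Sym2 W → Sym2 W} {g : Sym2 W' → Sym2 W'}

theorem IsEdgeMap.map (hf : IsEdgeMap H f) (hg : ∀ e, g (e.map ι) = (f e).map ι) :
    IsEdgeMap (H.map ι) g := by
  rw [IsEdgeMap, edgeSet_map]
  rintro _ ⟨e, he, rfl⟩
  rw [Function.Embedding.sym2Map_apply, hg]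
  exact ⟨⟨f e, (hf e he).1, rfl⟩, (Sym2.map.injective ι.injective).ne (hf e he).2⟩

theorem IsFreeSet.of_image_map {E : Set (Sym2 W)} (h : IsFreeSet g (Sym2.map ι '' E))
    (hg : ∀ e, g (e.map ι) = (f e).map ι) : IsFreeSet f E := fun e he hfe =>
  h _ ⟨e, he, rfl⟩ ⟨f e, hfe, (hg e).symm⟩

theorem exists_hom_comp_eq_of_hom_map (hG : ∀ v, ¬ G.IsIsolated v) (φ : G →g H.map ι) :
    ∃ ψ : G →g H, ι ∘ ψ = φ := by
  have mem_range : ∀ v, ∃ x, ι x = φ v := fun v => by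
    obtain ⟨w, hvw⟩ := not_forall_not.1 (hG v)
    obtain ⟨x, -, -, hx, -⟩ := (map_adj ι H _ _).1 (φ.map_adj hvw)
    exact ⟨x, hx⟩
  choose ψ hψ using mem_range
  have map_adj : ∀ {v w}, G.Adj v w → H.Adj (ψ v) (ψ w) := fun {v w} hvw => by
    rw [← map_adj_apply (f := ι), hψ, hψ]
    exact φ.map_adj hvw
  exact ⟨⟨ψ, map_adj⟩, funext hψ⟩

theorem NoFreeCopy.map (h : NoFreeCopy G H f) (hG : ∀ v, ¬ G.IsIsolated v)
    (hg : ∀ e, g (e.map ι) = (f e).map ι) : NoFreeCopy G (H.map ι) g := by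
  intro φ hφ hfree
  obtain ⟨ψ, hψ⟩ := exists_hom_comp_eq_of_hom_map hG φ
  have copyEdges_eq : copyEdges G (H.map ι) φ = Sym2.map ι '' copyEdges G H ψ := by
    rw [copyEdges, copyEdges, ← hψ, Sym2.map_comp, Set.image_comp]
  rw [copyEdges_eq] at hfree
  rw [← hψ] at hφ
  exact h ψ hφ.of_comp (hfree.of_image_map hg)

theorem hNum_mono (hG : ∀ v, ¬ G.IsIsolated v) : Monotone fun n => hNum n G := by
  intro m n hmn
  refine hNum_le fun H f hf hfree => ?_
  let ι := Fin.castLEEmb hmn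
  have map_injective : Function.Injective (Sym2.map ι) := Sym2.map.injective ι.injective
  let g := Function.extend (Sym2.map ι) (Sym2.map ι ∘ f) id
  have hg : ∀ e, g (e.map ι) = (f e).map ι := map_injective.extend_apply _ _
  calc H.edgeSet.ncard = (H.map ι).edgeSet.ncard := by
        rw [edgeSet_map]
        exact (Set.ncard_image_of_injective _ map_injective).symm
    _ ≤ hNum n G := ncard_edgeSet_le_hNum (hf.map hg) (hfree.map hG hg)

end Map

section MatchingTwo

theorem edgeSet_matching_two : (matching 2).edgeSet = {s(0, 1), s(2, 3)} := by
  have adj_iff : ∀ a b, (matching 2).Adj a b ↔ s(a, b) = s(0, 1) ∨ s(a, b) = s(2, 3) := by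
    simp only [matching, fromRel_adj]
    decide
  ext ⟨a, b⟩
  exact adj_iff a b

theorem not_isIsolated_matching_two (v : Fin 4) : ¬ (matching 2).IsIsolated v := by
  simp only [IsIsolated, matching, fromRel_adj]
  revert v
  decide

theorem copyEdges_matching_two {H : SimpleGraph W} (φ : matching 2 →g H) :
    copyEdges (matching 2) H φ = {s(φ 0, φ 1), s(φ 2, φ 3)} := by
  rw [copyEdges, edgeSet_matching_two, Set.image_pair, Sym2.map_mk, Sym2.map_mk]

theorem sym2Disjoint_mk_mk {a b c d : V} :
    sym2Disjoint s(a, b) s(c, d) ↔ (a ≠ c ∧ a ≠ d) ∧ b ≠ c ∧ b ≠ d := by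
  simp [sym2Disjoint]

theorem exists_copyEdges_matching_two_eq_iff {H : SimpleGraph W} {E : Set (Sym2 W)} :
    (∃ φ : matching 2 →g H, Function.Injective φ ∧ copyEdges (matching 2) H φ = E) ↔
      ∃ e ∈ H.edgeSet, ∃ e' ∈ H.edgeSet, sym2Disjoint e e' ∧ {e, e'} = E := by
  constructor
  · rintro ⟨φ, hφ, rfl⟩
    have map_mem : ∀ e ∈ (matching 2).edgeSet, e.map φ ∈ H.edgeSet := fun _ => φ.map_mem_edgeSet
    rw [edgeSet_matching_two] at map_mem
    refine ⟨s(φ 0, φ 1), map_mem s(0, 1) (.inl rfl), s(φ 2, φ 3), map_mem s(2, 3) (.inr rfl),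
      ?_, (copyEdges_matching_two φ).symm⟩
    simp only [sym2Disjoint_mk_mk, hφ.ne_iff]
    decide
  · rintro ⟨⟨a, b⟩, hab, ⟨c, d⟩, hcd, hdisj, rfl⟩
    obtain ⟨⟨hac, had⟩, hbc, hbd⟩ := sym2Disjoint_mk_mk.1 hdisj
    have map_adj : ∀ {x y}, (matching 2).Adj x y → H.Adj (![a, b, c, d] x) (![a, b, c, d] y) := by
      intro x y hxy
      rw [← mem_edgeSet, edgeSet_matching_two] at hxy
      rw [← mem_edgeSet, ← Sym2.map_mk]
      rcases hxy with hxy | hxy <;> rw [hxy] <;> assumption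
    have injective : Function.Injective ![a, b, c, d] := by
      have := H.ne_of_adj hab
      have := H.ne_of_adj hcd
      intro x y hxy
      fin_cases x <;> fin_cases y <;> simp_all [eq_comm]
    exact ⟨⟨![a, b, c, d], map_adj⟩, injective, copyEdges_matching_two _⟩

theorem isFreeSet_pair_iff {f : Sym2 W → Sym2 W} {e e' : Sym2 W} (he : f e ≠ e) (he' : f e' ≠ e') :
    IsFreeSet f {e, e'} ↔ f e ≠ e' ∧ f e' ≠ e := by
  simp [IsFreeSet, he, he']

theorem noFreeCopy_matching_two_iff {H : SimpleGraph W} {f : Sym2 W → Sym2 W}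
    (hf : IsEdgeMap H f) :
    NoFreeCopy (matching 2) H f ↔
      ∀ e ∈ H.edgeSet, ∀ e' ∈ H.edgeSet, sym2Disjoint e e' → f e = e' ∨ f e' = e := by
  constructor
  · intro h e he e' he' hdisj
    obtain ⟨φ, hφ, hE⟩ := exists_copyEdges_matching_two_eq_iff.2 ⟨e, he, e', he', hdisj, rfl⟩
    have not_free := h φ hφ
    rw [hE, isFreeSet_pair_iff (hf e he).2 (hf e' he').2] at not_free
    tauto
  · intro h φ hφ hfree
    obtain ⟨e, he, e', he', hdisj, hE⟩ := exists_copyEdges_matching_two_eq_iff.1 ⟨φ, hφ, rfl⟩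
    rw [← hE, isFreeSet_pair_iff (hf e he).2 (hf e' he').2] at hfree
    exact (h e he e' he' hdisj).elim hfree.1 hfree.2

end MatchingTwo

section UpperBound

open scoped Finset

theorem card_mul_sub_le_card_of_apply_eq_or_apply_eq {α β : Type*} {E : Finset α} {B : Finset β}
    {r : α → β → Prop} [∀ a b, Decidable (r a b)] {f : α → α} {k l : ℕ}
    (hk : ∀ e ∈ E, k ≤ #{b ∈ B | r e b})
    (hl : ∀ e ∈ E, #{b ∈ B | r e b ∧ r (f e) b} ≤ l)
    (hf : ∀ b ∈ B, ∀ e ∈ E, ∀ e' ∈ E, e ≠ e' → r e b → r e' b → f e = e' ∨ f e' = e) :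
    #E * (k - l) ≤ #B := by
  rw [← mul_one #B]
  refine Finset.card_mul_le_card_mul (fun e b => r e b ∧ ¬ r (f e) b) (fun e he => ?_)
    fun b hb => Finset.card_le_one.2 fun e he e' he' => ?_
  · have split := Finset.card_filter_add_card_filter_not (s := {b ∈ B | r e b}) (r (f e))
    rw [Finset.filter_filter, Finset.filter_filter] at split
    have := hk e he
    have := hl e he
    simp only [Finset.bipartiteAbove]
    omega
  · simp only [Finset.mem_bipartiteBelow] at he he'
    by_contra hne
    rcases hf b hb e he.1 e' he'.1 hne he.2.1 he'.2.1 with rfl | rfl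
    · exact he.2.2 he'.2.1
    · exact he'.2.2 he.2.1

/-- The perfect matchings of the complete graph on `V`, encoded as the fixed-point-free involutions
`σ` of `V`: two vertices are matched when `σ` swaps them. -/
def perfectMatchings (V : Type*) [Fintype V] [DecidableEq V] : Finset (Equiv.Perm V) :=
  {σ | ∀ v, σ v ≠ v ∧ σ (σ v) = v}

/-- The edges of the perfect matching encoded by the fixed-point-free involution `σ`: since `σ` has
no fixed points, it leaves an unordered pair invariant only by swapping its two elements. -/
def matchingEdges [Fintype V] [DecidableEq V] (σ : Equiv.Perm V) : Finset (Sym2 V) :=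
  {e | e.map σ = e}

section

variable [Fintype V] [DecidableEq V] {σ : Equiv.Perm V} {e e' : Sym2 V}

theorem mem_perfectMatchings : σ ∈ perfectMatchings V ↔ ∀ v, σ v ≠ v ∧ σ (σ v) = v :=
  Finset.mem_filter_univ σ

theorem mem_matchingEdges : e ∈ matchingEdges σ ↔ e.map σ = e :=
  Finset.mem_filter_univ e

theorem eq_mk_of_mem_matchingEdges {v : V} (hσ : σ v ≠ v) (he : e ∈ matchingEdges σ) (hv : v ∈ e) :
    e = s(v, σ v) :=
  (Sym2.mem_and_mem_iff hσ.symm).1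
    ⟨hv, mem_matchingEdges.1 he ▸ Sym2.mem_map.2 ⟨v, hv, rfl⟩⟩

theorem sym2Disjoint_of_mem_matchingEdges (hσ : ∀ v, σ v ≠ v) (he : e ∈ matchingEdges σ)
    (he' : e' ∈ matchingEdges σ) (hne : e ≠ e') : sym2Disjoint e e' := fun v hv hv' =>
  hne <| (eq_mk_of_mem_matchingEdges (hσ v) he hv).trans
    (eq_mk_of_mem_matchingEdges (hσ v) he' hv').symm

end

theorem card_perfectMatchings_fin_six : #(perfectMatchings (Fin 6)) = 15 := by
  decide +kernel

theorem card_perfectMatchings_fin_six_through : ∀ e : Sym2 (Fin 6), ¬ e.IsDiag →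
    #{σ ∈ perfectMatchings (Fin 6) | e ∈ matchingEdges σ} = 3 := by
  decide +kernel

theorem card_matchingEdges_inter_le_one : ∀ σ ∈ perfectMatchings (Fin 6),
    ∀ τ ∈ perfectMatchings (Fin 6), σ ≠ τ → #(matchingEdges σ ∩ matchingEdges τ) ≤ 1 := by
  decide +kernel

theorem card_perfectMatchings_fin_six_through_pair_le_one {e e' : Sym2 (Fin 6)} (hne : e ≠ e') :
    #{σ ∈ perfectMatchings (Fin 6) | e ∈ matchingEdges σ ∧ e' ∈ matchingEdges σ} ≤ 1 := by
  refine Finset.card_le_one.2 fun σ hσ τ hτ => ?_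
  obtain ⟨hσ, heσ, he'σ⟩ := Finset.mem_filter.1 hσ
  obtain ⟨hτ, heτ, he'τ⟩ := Finset.mem_filter.1 hτ
  by_contra hστ
  exact hne (Finset.card_le_one.1 (card_matchingEdges_inter_le_one σ hσ τ hτ hστ)
    e (Finset.mem_inter.2 ⟨heσ, heτ⟩) e' (Finset.mem_inter.2 ⟨he'σ, he'τ⟩))

theorem hNum_six_matching_two_le : hNum 6 (matching 2) ≤ 7 := by
  refine hNum_le fun H f hf hfree => ?_
  classical
  rw [noFreeCopy_matching_two_iff hf] at hfree
  rw [← coe_edgeFinset, Set.ncard_coe_finset]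
  have count : #H.edgeFinset * (3 - 1) ≤ #(perfectMatchings (Fin 6)) := by
    refine card_mul_sub_le_card_of_apply_eq_or_apply_eq (f := f)
      (r := fun e σ => e ∈ matchingEdges σ) ?_ ?_ ?_
    · intro e he
      exact (card_perfectMatchings_fin_six_through e
        (H.not_isDiag_of_mem_edgeSet (mem_edgeFinset.1 he))).ge
    · intro e he
      exact card_perfectMatchings_fin_six_through_pair_le_one (hf e (mem_edgeFinset.1 he)).2.symm
    · intro σ hσ e he e' he' hne heσ he'σ
      have fixed_point_free : ∀ v, σ v ≠ v := fun v => (mem_perfectMatchings.1 hσ v).1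
      exact hfree e (mem_edgeFinset.1 he) e' (mem_edgeFinset.1 he')
        (sym2Disjoint_of_mem_matchingEdges fixed_point_free heσ he'σ hne)
  rw [card_perfectMatchings_fin_six] at count
  omega

end UpperBound

section LowerBound

instance decidableSym2Disjoint [Fintype V] [DecidableEq V] (e e' : Sym2 V) :
    Decidable (sym2Disjoint e e') :=
  inferInstanceAs (Decidable (∀ v, v ∈ e → v ∉ e'))

theorem card_le_hNum_matching_two {n : ℕ} {E : Finset (Sym2 (Fin n))}
    {f : Sym2 (Fin n) → Sym2 (Fin n)} (hE : ∀ e ∈ E, ¬ e.IsDiag)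
    (hf : ∀ e ∈ E, f e ∈ E ∧ f e ≠ e)
    (hdisj : ∀ e ∈ E, ∀ e' ∈ E, sym2Disjoint e e' → f e = e' ∨ f e' = e) :
    E.card ≤ hNum n (matching 2) := by
  have edgeSet_eq : (fromEdgeSet (E : Set (Sym2 (Fin n)))).edgeSet = E := by
    rw [edgeSet_fromEdgeSet]
    exact sdiff_eq_left.2 (Set.disjoint_left.2 hE)
  have isEdgeMap : IsEdgeMap (fromEdgeSet (E : Set (Sym2 (Fin n)))) f := by
    rwa [IsEdgeMap, edgeSet_eq]
  have noFreeCopy : NoFreeCopy (matching 2) (fromEdgeSet (E : Set (Sym2 (Fin n)))) f := by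
    rwa [noFreeCopy_matching_two_iff isEdgeMap, edgeSet_eq]
  simpa only [edgeSet_eq, Set.ncard_coe_finset] using ncard_edgeSet_le_hNum isEdgeMap noFreeCopy

/-- The edge set of the complete graph `K₄` on the vertices `0, 1, 2, 3`. -/
def completeFourEdges (n : ℕ) [NeZero n] : Finset (Sym2 (Fin n)) :=
  {s(0, 1), s(0, 2), s(0, 3), s(1, 2), s(1, 3), s(2, 3)}

/-- The map that sends each edge of `K₄` through `0` to the edge disjoint from it, and every other
edge to `d`, which is to be the pendant edge when there is one. -/
def oppositeEdgeOr {n : ℕ} [NeZero n] (d e : Sym2 (Fin n)) : Sym2 (Fin n) :=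
  if e = s(0, 1) then s(2, 3) else if e = s(0, 2) then s(1, 3) else
    if e = s(0, 3) then s(1, 2) else d

theorem six_le_hNum_four_matching_two : 6 ≤ hNum 4 (matching 2) :=
  calc 6 = (completeFourEdges 4).card := by decide
    _ ≤ hNum 4 (matching 2) :=
      card_le_hNum_matching_two (f := oppositeEdgeOr s(0, 1))
        (by decide) (by decide) (by decide)

theorem seven_le_hNum_five_matching_two : 7 ≤ hNum 5 (matching 2) :=
  calc 7 = (insert s(0, 4) (completeFourEdges 5)).card := by decide
    _ ≤ hNum 5 (matching 2) :=
      card_le_hNum_matching_two (f := Function.update (oppositeEdgeOr s(0, 4)) s(0, 4) s(0, 1))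
        (by decide) (by decide) (by decide)

end LowerBound

/-- h(4, 2K₂) = 6, h(5, 2K₂) = 7, h(6, 2K₂) = 7. -/
theorem stmt8 : hNum 4 (matching 2) = 6 ∧ hNum 5 (matching 2) = 7 ∧
    hNum 6 (matching 2) = 7 := by
  have five_le_six : hNum 5 (matching 2) ≤ hNum 6 (matching 2) :=
    hNum_mono not_isIsolated_matching_two (by decide)
  have seven_le_five := seven_le_hNum_five_matching_two
  have six_le_seven := hNum_six_matching_two_le
  exact ⟨(hNum_le_choose_two 4 _).antisymm six_le_hNum_four_matching_two,
    (five_le_six.trans six_le_seven).antisymm seven_le_five,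
    six_le_seven.antisymm (seven_le_five.trans five_le_six)⟩
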